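/- arXiv:0807.1491 — 7 statements merged into one kernel-verified Lean document; each statement's English description precedes it below -/
import Mathlib

section
/- Let R be an integral domain, Λ = R[A, A⁻¹] the Laurent polynomial ring, M a Λ-module, N = M/(A+1)·M regarded as an R-module via evaluation A ↦ −1, and π : M → N the quotient map. Suppose L₁, …, Lₙ ∈ M generate M as a Λ-module and the images π(L₁), …, π(Lₙ) are R-linearly independent in N. If M has a torsion element (i.e., there exist m ∈ M with m ≠ 0 and f ∈ Λ with f ≠ 0 such that f·m = 0), then M has (A+1)-torsion (i.e., there exists m ∈ M with m ≠ 0 and (A+1)·m = 0). -/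
open LaurentPolynomial

/-- Let `R` be an integral domain, `Λ = R[A,A⁻¹]`, `M` a `Λ`-module,
`P = (A+1)·M`, and `N = M ⧸ P` regarded as an `R`-module (via evaluation `A ↦ -1`).
If `L₁, …, Lₙ` generate `M` over `Λ`, their images in `N` are `R`-linearly
independent, and `M` has a torsion element, then `M` has `(A+1)`-torsion. -/
theorem laurent_A_plus_one_torsion_of_torsion
    (R : Type*) [CommRing R] [IsDomain R] (M : Type*) [AddCommGroup M]
    [Module (LaurentPolynomial R) M] [Module R M]
    [IsScalarTower R (LaurentPolynomial R) M]
    (n : ℕ) (L : Fin n → M)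
    (P : Submodule (LaurentPolynomial R) M)
    (hP : P = Ideal.span {(T 1 + 1 : LaurentPolynomial R)} •
      (⊤ : Submodule (LaurentPolynomial R) M))
    (hgen : Submodule.span (LaurentPolynomial R) (Set.range L) = ⊤)
    (hind : LinearIndependent R (fun i => Submodule.Quotient.mk (p := P) (L i)))
    (htors : ∃ (m : M) (f : LaurentPolynomial R), m ≠ 0 ∧ f ≠ 0 ∧ f • m = 0) :
    ∃ m : M, m ≠ 0 ∧ (T 1 + 1 : LaurentPolynomial R) • m = 0 := by
  classical
  by_contra hno
  push Not at hno
  have hreg : ∀ m : M, (T 1 + 1 : LaurentPolynomial R) • m = 0 → m = 0 := by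
    intro m hm
    by_contra h
    exact hno m h hm
  have hX : Polynomial.toLaurent (Polynomial.X - Polynomial.C (-1) : Polynomial R)
      = (T 1 + 1 : LaurentPolynomial R) := by
    simp
  have step : ∀ p : Fin n → Polynomial R, ∑ i, Polynomial.toLaurent (p i) • L i = 0 →
      ∃ q : Fin n → Polynomial R, (∀ i, p i = (Polynomial.X - Polynomial.C (-1)) * q i) ∧
        ∑ i, Polynomial.toLaurent (q i) • L i = 0 := by
    intro p hp
    let q : Fin n → Polynomial R := fun i => p i /ₘ (Polynomial.X - Polynomial.C (-1))
    have hq : ∀ i, p i = (Polynomial.X - Polynomial.C (-1)) * q i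
        + Polynomial.C ((p i).eval (-1)) := by
      intro i
      have := Polynomial.modByMonic_add_div (p i) (Polynomial.X - Polynomial.C (-1))
      rw [Polynomial.modByMonic_X_sub_C_eq_C_eval] at this
      rw [add_comm]
      exact this.symm
    have hsum : (T 1 + 1 : LaurentPolynomial R) • ∑ i, Polynomial.toLaurent (q i) • L i
        + ∑ i, ((p i).eval (-1)) • L i = 0 := by
      rw [← hp, Finset.smul_sum, ← Finset.sum_add_distrib]
      refine Finset.sum_congr rfl fun i _ => ?_
      conv_rhs => rw [hq i, map_add, map_mul, hX, Polynomial.toLaurent_C, add_smul, mul_smul]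
      congr 1
      rw [← mul_one (LaurentPolynomial.C _), ← LaurentPolynomial.smul_eq_C_mul, smul_assoc,
        one_smul]
    have hmem : ∑ i, ((p i).eval (-1)) • L i ∈ P := by
      rw [eq_neg_of_add_eq_zero_right hsum]
      refine P.neg_mem ?_
      rw [hP]
      exact Submodule.smul_mem_smul (Ideal.mem_span_singleton_self _) Submodule.mem_top
    have hz : ∀ i, (p i).eval (-1) = 0 := by
      refine Fintype.linearIndependent_iff.1 hind _ ?_
      rw [← (Submodule.Quotient.mk_eq_zero P)] at hmem
      rw [← hmem]
      simp only [← Submodule.Quotient.mk_smul]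
      exact (map_sum P.mkQ _ _).symm
    refine ⟨q, fun i => ?_, ?_⟩
    · have := hq i
      rwa [hz i, map_zero, add_zero] at this
    · apply hreg
      simpa [hz] using hsum
  have hdvd : ∀ k : ℕ, ∀ p : Fin n → Polynomial R,
      ∑ i, Polynomial.toLaurent (p i) • L i = 0 →
      ∀ i, (Polynomial.X - Polynomial.C (-1)) ^ k ∣ p i := by
    intro k
    induction k with
    | zero => intro p _ i; simp
    | succ k ih =>
      intro p hp i
      obtain ⟨q, h1, h2⟩ := step p hp
      rw [h1 i, pow_succ']
      exact mul_dvd_mul_left _ (ih q h2 i)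
  have hzero : ∀ p : Fin n → Polynomial R,
      ∑ i, Polynomial.toLaurent (p i) • L i = 0 → ∀ i, p i = 0 := by
    intro p hp i
    by_contra h
    have hf := Polynomial.finiteMultiplicity_X_sub_C (-1 : R) h
    obtain ⟨k, hk⟩ := hf
    exact hk (hdvd _ p hp i)
  obtain ⟨m, f, hm, hf, hfm⟩ := htors
  have hmem : m ∈ Submodule.span (LaurentPolynomial R) (Set.range L) := by
    rw [hgen]; trivial
  obtain ⟨c, hc⟩ := (Submodule.mem_span_range_iff_exists_fun _).1 hmem
  obtain ⟨b, hb⟩ := IsLocalization.exist_integer_multiples_of_finite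
    (Submonoid.powers (Polynomial.X : Polynomial R)) (fun i => f * c i)
  choose p hp using hb
  have hp' : ∀ i, Polynomial.toLaurent (p i)
      = Polynomial.toLaurent (b : Polynomial R) * (f * c i) := by
    intro i
    have := hp i
    rw [Algebra.smul_def] at this
    exact this
  have hb0 : Polynomial.toLaurent (b : Polynomial R) ≠ 0 := by
    obtain ⟨k, hk⟩ := b.2
    rw [Polynomial.toLaurent_ne_zero, ← hk]
    exact pow_ne_zero _ Polynomial.X_ne_zero
  have hp0 := hzero p (by
    simp only [hp', mul_smul, ← Finset.smul_sum]
    rw [hc, hfm, smul_zero])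
  apply hm
  rw [← hc]
  refine Finset.sum_eq_zero fun i _ => ?_
  have h := hp' i
  rw [hp0 i, map_zero] at h
  have : c i = 0 := by
    rcases mul_eq_zero.1 h.symm with h | h
    · exact absurd h hb0
    · exact (mul_eq_zero.1 h).resolve_left hf
  rw [this, zero_smul]
end

section
/- The matrices A₁ and B₁ lie in SL(2,ℂ), i.e., det A₁ = 1 and det B₁ = 1, and they satisfy A₁⁵ = B₁³ = (A₁B₁)² = −I, where I is the 2×2 identity matrix. Consequently, sending r ↦ A₁ and s ↦ B₁ defines a homomorphism σ₁ from the binary icosahedral group G = ⟨r, s ∣ r⁵ = s³ = (rs)²⟩ into SL(2,ℂ). -/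
noncomputable section

/-- `e₅ = exp(2πi/5)`. -/
def e5 : ℂ := Complex.exp (2 * Real.pi * Complex.I / 5)

/-- The matrix `A₁`, image of the generator `r` under the representation `σ₁`. -/
def A1 : Matrix (Fin 2) (Fin 2) ℂ :=
  (1/5 : ℂ) • !![-3*e5 - e5^2 + e5^3 - 2*e5^4, e5 - 3*e5^2 - 2*e5^3 - e5^4;
                 e5 + 2*e5^2 + 3*e5^3 - e5^4, -2*e5 + e5^2 - e5^3 - 3*e5^4]

/-- The matrix `B₁`, image of the generator `s` under the representation `σ₁`. -/
def B1 : Matrix (Fin 2) (Fin 2) ℂ :=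
  (1/5 : ℂ) • !![-e5 - 2*e5^2 - 3*e5^3 - 4*e5^4, 2*e5 - e5^2 + e5^3 - 2*e5^4;
                 2*e5 - e5^2 + e5^3 - 2*e5^4, -4*e5 - 3*e5^2 - 2*e5^3 - e5^4]

/-- Relators `r⁵((rs)²)⁻¹` and `s³((rs)²)⁻¹` of the binary icosahedral group
`⟨r, s ∣ r⁵ = s³ = (rs)²⟩`, with `r = of 0` and `s = of 1`. -/
def icosRels : Set (FreeGroup (Fin 2)) :=
  {FreeGroup.of 0 ^ 5 * ((FreeGroup.of 0 * FreeGroup.of 1) ^ 2)⁻¹,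
   FreeGroup.of 1 ^ 3 * ((FreeGroup.of 0 * FreeGroup.of 1) ^ 2)⁻¹}

theorem e5_rel : e5 ^ 4 + e5 ^ 3 + e5 ^ 2 + e5 + 1 = 0 := by
  have hp : IsPrimitiveRoot e5 5 := by
    have := Complex.isPrimitiveRoot_exp 5 (by norm_num)
    simpa [e5] using this
  have h := hp.geom_sum_eq_zero (by norm_num)
  simp only [Finset.sum_range_succ, Finset.sum_range_zero] at h
  linear_combination h

theorem sq_of_det_one (M : Matrix (Fin 2) (Fin 2) ℂ) (t : ℂ) (hd : M.det = 1)
    (ht : M 0 0 + M 1 1 = t) : M ^ 2 = t • M - 1 := by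
  rw [Matrix.det_fin_two] at hd
  subst ht
  ext i j
  fin_cases i <;> fin_cases j <;> simp [pow_two, Matrix.mul_apply, Fin.sum_univ_two] <;>
    first | linear_combination -hd | ring1

theorem A1_det : A1.det = 1 := by
  have h := e5_rel
  have h5 : e5 ^ 5 = 1 := by linear_combination (e5 - 1) * h
  simp only [A1, Matrix.det_smul, Matrix.det_fin_two_of, Fintype.card_fin]
  grind

theorem B1_det : B1.det = 1 := by
  have h := e5_rel
  have h5 : e5 ^ 5 = 1 := by linear_combination (e5 - 1) * h
  simp only [B1, Matrix.det_smul, Matrix.det_fin_two_of, Fintype.card_fin]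
  grind

theorem A1_pow : A1 ^ 5 = -1 := by
  have h := e5_rel
  have h2 := sq_of_det_one A1 (-(e5 + e5 ^ 4)) A1_det (by simp [A1]; ring)
  generalize ht : -(e5 + e5 ^ 4) = t at h2
  have h5 : e5 ^ 5 = 1 := by linear_combination (e5 - 1) * h
  have q : t ^ 2 = t + 1 := by subst ht; grind
  have h3 : A1 ^ 3 = t • A1 - t • 1 := by
    rw [pow_succ, h2, sub_mul, smul_mul_assoc, ← pow_two, h2, smul_sub, smul_smul, ← pow_two, q,
      add_smul, one_smul, one_mul]
    abel
  have : A1 ^ 5 = A1 ^ 2 * A1 ^ 3 := by rw [← pow_add]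
  rw [this, h3, mul_sub, mul_smul_comm, mul_smul_comm, ← pow_succ, h3, mul_one, h2, ← smul_sub]
  have q2 : t * (1 - t) = -1 := by linear_combination -q
  have e : t • A1 - t • 1 - (t • A1 - 1) = (1 - t) • (1 : Matrix (Fin 2) (Fin 2) ℂ) := by module
  rw [e, smul_smul, q2]; simp

theorem B1_pow : B1 ^ 3 = -1 := by
  have h := e5_rel
  have h2 := sq_of_det_one B1 1 B1_det (by simp [B1]; linear_combination -h)
  rw [one_smul] at h2
  rw [pow_succ, h2, sub_mul, ← pow_two, h2]; simp

theorem AB_pow : (A1 * B1) ^ 2 = -1 := by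
  have h := e5_rel
  have h5 : e5 ^ 5 = 1 := by linear_combination (e5 - 1) * h
  have h2 := sq_of_det_one (A1 * B1) 0 (by rw [Matrix.det_mul, A1_det, B1_det, one_mul])
    (by simp [A1, B1, Matrix.mul_apply, Fin.sum_univ_two]; grind)
  rw [h2]; simp

/-- `A₁, B₁ ∈ SL(2,ℂ)`, they satisfy `A₁⁵ = B₁³ = (A₁B₁)² = -I`, and
consequently `r ↦ A₁`, `s ↦ B₁` defines a homomorphism `σ₁` from the binary icosahedral
group `G = ⟨r, s ∣ r⁵ = s³ = (rs)²⟩` into `SL(2,ℂ)`. -/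
theorem sigma1_representation :
    A1.det = 1 ∧ B1.det = 1 ∧
    A1 ^ 5 = -(1 : Matrix (Fin 2) (Fin 2) ℂ) ∧
    B1 ^ 3 = -(1 : Matrix (Fin 2) (Fin 2) ℂ) ∧
    (A1 * B1) ^ 2 = -(1 : Matrix (Fin 2) (Fin 2) ℂ) ∧
    ∃ σ : PresentedGroup icosRels →* Matrix.SpecialLinearGroup (Fin 2) ℂ,
      ((σ (PresentedGroup.of 0) : Matrix.SpecialLinearGroup (Fin 2) ℂ) :
          Matrix (Fin 2) (Fin 2) ℂ) = A1 ∧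
      ((σ (PresentedGroup.of 1) : Matrix.SpecialLinearGroup (Fin 2) ℂ) :
          Matrix (Fin 2) (Fin 2) ℂ) = B1 := by
  refine ⟨A1_det, B1_det, A1_pow, B1_pow, AB_pow, ?_⟩
  let f : Fin 2 → Matrix.SpecialLinearGroup (Fin 2) ℂ := ![⟨A1, A1_det⟩, ⟨B1, B1_det⟩]
  have hf : ∀ r ∈ icosRels, FreeGroup.lift f r = 1 := by
    intro r hr
    rcases hr with rfl | rfl
    · rw [map_mul, map_inv, mul_inv_eq_one]
      apply Subtype.ext
      simp only [map_pow, map_mul, FreeGroup.lift_apply_of, Matrix.SpecialLinearGroup.coe_pow,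
        Matrix.SpecialLinearGroup.coe_mul]
      exact A1_pow.trans AB_pow.symm
    · rw [map_mul, map_inv, mul_inv_eq_one]
      apply Subtype.ext
      simp only [map_pow, map_mul, FreeGroup.lift_apply_of, Matrix.SpecialLinearGroup.coe_pow,
        Matrix.SpecialLinearGroup.coe_mul]
      exact B1_pow.trans AB_pow.symm
  refine ⟨PresentedGroup.toGroup hf, ?_, ?_⟩
  · rw [PresentedGroup.toGroup.of]; rfl
  · rw [PresentedGroup.toGroup.of]; rfl

end
end

section
/- The 3×3 complex matrix [[2, 2, 2], [2, −e₅ − e₅⁴, 1], [2, −e₅² − e₅³, 1]] is invertible, i.e., its determinant is nonzero. Consequently the three vectors (2, 2, 2), (2, −e₅ − e₅⁴, 1), (2, −e₅² − e₅³, 1) are linearly independent over ℂ, which shows that the evaluation maps τ₁, τ_r, τ_s are linearly independent on the SL(2,ℂ) character variety of the binary icosahedral group. -/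
noncomputable section

theorem e5_cyclo : 1 + e5 + e5^2 + e5^3 + e5^4 = 0 := by
  have h : IsPrimitiveRoot e5 5 := by
    have := Complex.isPrimitiveRoot_exp 5 (by norm_num)
    simpa [e5] using this
  have := h.geom_sum_eq_zero (by norm_num)
  simpa [Finset.sum_range_succ] using this

theorem e5_det : (!![2, 2, 2;
        2, -e5 - e5^4, 1;
        2, -e5^2 - e5^3, 1] : Matrix (Fin 3) (Fin 3) ℂ).det ≠ 0 := by
  intro h
  rw [Matrix.det_fin_three] at h
  simp at h
  have hx : e5 - e5^2 - e5^3 + e5^4 = 0 := by linear_combination h / 2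
  have h5 : (e5 - e5^2 - e5^3 + e5^4)^2 = 5 := by
    linear_combination (e5^4 - 3*e5^3 + e5^2 + 5*e5 - 5) * e5_cyclo
  rw [hx] at h5
  norm_num at h5

/-- The matrix whose rows record the values of the evaluation maps
`τ₁, τ_r, τ_s` on the three characters `χ₀, χ₁, χ₂` of the binary icosahedral group is
invertible (its determinant is nonzero); consequently its three rows are linearly
independent over `ℂ`. -/
theorem tau_evaluation_matrix_invertible :
    (!![2, 2, 2;
        2, -e5 - e5^4, 1;
        2, -e5^2 - e5^3, 1] : Matrix (Fin 3) (Fin 3) ℂ).det ≠ 0 ∧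
    LinearIndependent ℂ
      ![(![2, 2, 2] : Fin 3 → ℂ),
        ![2, -e5 - e5^4, 1],
        ![2, -e5^2 - e5^3, 1]] := by
  exact ⟨e5_det, Matrix.linearIndependent_rows_of_det_ne_zero e5_det⟩

end
end

section
/- The binary icosahedral group G = ⟨r, s ∣ r⁵ = s³ = (rs)²⟩ is perfect: its abelianization is the trivial group (equivalently, every group homomorphism from G to any commutative group is trivial, and G equals its own commutator subgroup). -/
theorem icos_comm_trivial (H : Type) [CommGroup H] (f : PresentedGroup icosRels →* H)
    (g : PresentedGroup icosRels) : f g = 1 := by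
  have h1 : (PresentedGroup.mk icosRels)
      (FreeGroup.of 0 ^ 5 * ((FreeGroup.of 0 * FreeGroup.of 1) ^ 2)⁻¹) = 1 :=
    PresentedGroup.one_of_mem (by simp [icosRels])
  have h2 : (PresentedGroup.mk icosRels)
      (FreeGroup.of 1 ^ 3 * ((FreeGroup.of 0 * FreeGroup.of 1) ^ 2)⁻¹) = 1 :=
    PresentedGroup.one_of_mem (by simp [icosRels])
  replace h1 := congrArg f h1
  replace h2 := congrArg f h2
  simp only [map_mul, map_pow, map_inv, map_one, mul_inv_eq_one] at h1 h2
  have key : ∀ a b : H, a ^ 5 = (a * b) ^ 2 → b ^ 3 = (a * b) ^ 2 → a = 1 ∧ b = 1 := by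
    intro a b e1 e2
    rw [mul_pow] at e1 e2
    have e3 : a ^ 3 = b ^ 2 := by
      apply mul_left_cancel (a := a ^ 2)
      rw [← e1, ← pow_add]
    have e4 : b = a ^ 2 := by
      apply mul_right_cancel (b := b ^ 2)
      rw [← e2, ← pow_succ']
    have ha : a = 1 := by
      rw [e4, ← pow_mul] at e3
      apply mul_left_cancel (a := a ^ 3)
      rw [← pow_succ, mul_one]
      exact e3.symm
    exact ⟨ha, by rw [e4, ha, one_pow]⟩
  obtain ⟨ha, hb⟩ := key _ _ h1 h2
  have hf : f = 1 := by
    apply PresentedGroup.ext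
    intro x
    fin_cases x
    · exact ha
    · exact hb
  rw [hf]
  rfl

/-- The binary icosahedral group `G = ⟨r, s ∣ r⁵ = s³ = (rs)²⟩` is
perfect: its abelianization is trivial; equivalently, every homomorphism from `G` to a
commutative group is trivial, and `G` equals its own commutator subgroup. -/
theorem binaryIcosahedral_perfect :
    Subsingleton (Abelianization (PresentedGroup icosRels)) ∧
    (∀ (H : Type) [CommGroup H] (f : PresentedGroup icosRels →* H)
        (g : PresentedGroup icosRels), f g = 1) ∧
    commutator (PresentedGroup icosRels) = ⊤ := by
  have hs : Subsingleton (Abelianization (PresentedGroup icosRels)) := by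
    refine subsingleton_of_forall_eq 1 fun x => ?_
    obtain ⟨g, rfl⟩ := QuotientGroup.mk_surjective x
    exact icos_comm_trivial _ Abelianization.of g
  refine ⟨hs, fun H _ f g => icos_comm_trivial H f g, ?_⟩
  rw [eq_top_iff]
  intro g _
  rw [← Abelianization.ker_of]
  exact icos_comm_trivial _ Abelianization.of g
end

section
/- Every reducible SL(2,ℂ)-representation of the binary icosahedral group is trivial: if ρ : G → SL(2,ℂ) is a group homomorphism and there exists a nonzero vector v ∈ ℂ² such that for every g ∈ G the vector v is an eigenvector of ρ(g) (i.e., for every g there exists λ ∈ ℂ with ρ(g)·v = λ·v), then ρ(g) is the identity matrix for all g ∈ G. In particular, every reducible SL(2,ℂ)-representation of G is equivalent to the trivial 2-dimensional representation σ₀. -/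
def icosN (v : Fin 2 → ℂ) : Matrix (Fin 2) (Fin 2) ℂ :=
  !![v 0 * v 1, -(v 0 * v 0); v 1 * v 1, -(v 0 * v 1)]

lemma icosN_sq (v : Fin 2 → ℂ) : icosN v * icosN v = 0 := by
  ext i j
  fin_cases i <;> fin_cases j <;> simp [icosN, Matrix.mul_apply, Fin.sum_univ_two] <;> ring

lemma icosN_ne (v : Fin 2 → ℂ) (hv : v ≠ 0) : icosN v ≠ 0 := by
  intro h
  apply hv
  have h1 := congrFun (congrFun h 0) 1
  have h2 := congrFun (congrFun h 1) 0
  simp [icosN] at h1 h2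
  ext i
  fin_cases i <;> simp [h1, h2]

lemma icos_mul (v : Fin 2 → ℂ) (x y : ℂ) :
    (1 + x • icosN v) * (1 + y • icosN v) = 1 + (x + y) • icosN v := by
  simp only [mul_add, add_mul, one_mul, mul_one, smul_mul_assoc, mul_smul_comm, icosN_sq,
    smul_zero, add_smul, add_zero]
  rw [add_assoc]

lemma icos_pow (v : Fin 2 → ℂ) (x : ℂ) (n : ℕ) :
    (1 + x • icosN v) ^ n = 1 + ((n : ℂ) * x) • icosN v := by
  induction n with
  | zero => simp
  | succ k ih =>
    rw [pow_succ, ih, icos_mul]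
    push_cast
    ring_nf

lemma icos_inj (v : Fin 2 → ℂ) (hv : v ≠ 0) (x y : ℂ)
    (h : 1 + x • icosN v = 1 + y • icosN v) : x = y := by
  exact smul_left_injective ℂ (icosN_ne v hv) (add_left_cancel h)

lemma icos_form (v : Fin 2 → ℂ) (hv : v ≠ 0) (M : Matrix (Fin 2) (Fin 2) ℂ)
    (hd : M.det = 1) (hM : M.mulVec v = v) : ∃ x : ℂ, M = 1 + x • icosN v := by
  have e0 := congrFun hM 0
  have e1 := congrFun hM 1
  simp only [Matrix.mulVec, dotProduct, Fin.sum_univ_two] at e0 e1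
  rw [Matrix.det_fin_two] at hd
  by_cases h0 : v 0 = 0
  · have h1 : v 1 ≠ 0 := by
      intro h1
      apply hv
      ext i
      fin_cases i <;> simp [h0, h1]
    have m01 : M 0 1 = 0 := by simpa [h0, h1] using e0
    have m11 : M 1 1 = 1 := by simpa [h0, h1] using e1
    have m00 : M 0 0 = 1 := by simpa [m01, m11] using hd
    refine ⟨M 1 0 / (v 1 * v 1), ?_⟩
    ext i j
    fin_cases i <;> fin_cases j <;> simp [icosN, h0, h1, m01, m11, m00]
  · have t : M 0 0 + M 1 1 = 2 := by
      have : v 0 * (M 0 0 + M 1 1 - 2) = 0 := by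
        linear_combination (1 - M 1 1) * e0 + M 0 1 * e1 + v 0 * hd
      rcases mul_eq_zero.1 this with h | h
      · exact absurd h h0
      · linear_combination h
    refine ⟨- M 0 1 / (v 0 * v 0), ?_⟩
    ext i j
    fin_cases i <;> fin_cases j <;> simp [icosN] <;> field_simp
    · linear_combination e0
    · linear_combination v 0 * e1 - v 1 * v 0 * t + v 1 * e0
    · linear_combination v 0 * t - e0

/-- Every reducible `SL(2,ℂ)`-representation of the binary icosahedral
group `G = ⟨r, s ∣ r⁵ = s³ = (rs)²⟩` is trivial: if `ρ : G → SL(2,ℂ)` is a homomorphism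
and some nonzero `v ∈ ℂ²` is an eigenvector of every `ρ(g)`, then `ρ(g)` is the identity
matrix for all `g`; in particular `ρ` is equivalent to the trivial `2`-dimensional
representation `σ₀`. -/
theorem binaryIcosahedral_reducible_rep_trivial
    (ρ : PresentedGroup icosRels →* Matrix.SpecialLinearGroup (Fin 2) ℂ)
    (v : Fin 2 → ℂ) (hv : v ≠ 0)
    (heig : ∀ g : PresentedGroup icosRels,
      ∃ l : ℂ, ((ρ g : Matrix.SpecialLinearGroup (Fin 2) ℂ) :
        Matrix (Fin 2) (Fin 2) ℂ).mulVec v = l • v) :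
    ∀ g : PresentedGroup icosRels,
      ((ρ g : Matrix.SpecialLinearGroup (Fin 2) ℂ) : Matrix (Fin 2) (Fin 2) ℂ) = 1 := by
  set r : PresentedGroup icosRels := PresentedGroup.of 0 with hr
  set s : PresentedGroup icosRels := PresentedGroup.of 1 with hs
  have R1 : r ^ 5 = (r * s) ^ 2 := by
    have := PresentedGroup.one_of_mem (rels := icosRels) (Or.inl rfl)
    rw [map_mul, map_inv, mul_inv_eq_one] at this
    simp only [map_mul, map_pow] at this
    exact this
  have R2 : s ^ 3 = (r * s) ^ 2 := by
    have := PresentedGroup.one_of_mem (rels := icosRels) (Or.inr rfl)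
    rw [map_mul, map_inv, mul_inv_eq_one] at this
    simp only [map_mul, map_pow] at this
    exact this
  have S1 := congrArg (fun g => ((ρ g : Matrix.SpecialLinearGroup (Fin 2) ℂ) :
        Matrix (Fin 2) (Fin 2) ℂ)) R1
  have S2 := congrArg (fun g => ((ρ g : Matrix.SpecialLinearGroup (Fin 2) ℂ) :
        Matrix (Fin 2) (Fin 2) ℂ)) R2
  simp only [map_mul, map_pow, Matrix.SpecialLinearGroup.coe_mul,
    Matrix.SpecialLinearGroup.coe_pow] at S1 S2
  obtain ⟨a, ha⟩ := heig r
  obtain ⟨b, hb⟩ := heig s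
  have dA := (ρ r).det_coe
  have dB := (ρ s).det_coe
  suffices H : ρ r = 1 ∧ ρ s = 1 by
    have : ρ = 1 := by
      apply PresentedGroup.ext
      intro i
      fin_cases i
      · simpa using H.1
      · simpa using H.2
    intro g
    simp [this]
  suffices H : (ρ r : Matrix (Fin 2) (Fin 2) ℂ) = 1 ∧ (ρ s : Matrix (Fin 2) (Fin 2) ℂ) = 1 from
    ⟨Subtype.ext H.1, Subtype.ext H.2⟩
  generalize (ρ r : Matrix (Fin 2) (Fin 2) ℂ) = A at *
  generalize (ρ s : Matrix (Fin 2) (Fin 2) ℂ) = B at *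
  have pw : ∀ (M : Matrix (Fin 2) (Fin 2) ℂ) (c : ℂ), M.mulVec v = c • v →
      ∀ n : ℕ, (M ^ n).mulVec v = c ^ n • v := by
    intro M c h n
    induction n with
    | zero => simp
    | succ k ih =>
      rw [pow_succ, ← Matrix.mulVec_mulVec, h, Matrix.mulVec_smul, ih, smul_smul, pow_succ,
        mul_comm]
  have hab : (A * B).mulVec v = (a * b) • v := by
    rw [← Matrix.mulVec_mulVec, hb, Matrix.mulVec_smul, ha, smul_smul, mul_comm]
  have ne0 : ∀ (M : Matrix (Fin 2) (Fin 2) ℂ) (c : ℂ), M.det = 1 → M.mulVec v = c • v →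
      c ≠ 0 := by
    intro M c hd h hc
    rw [hc, zero_smul] at h
    exact hv (Matrix.eq_zero_of_mulVec_eq_zero (by simp [hd]) h)
  have a0 := ne0 A a dA ha
  have b0 := ne0 B b dB hb
  have q1 : a ^ 5 = (a * b) ^ 2 := by
    apply smul_left_injective ℂ hv
    simp only
    rw [← pw A a ha, ← pw _ _ hab, S1]
  have q2 : b ^ 3 = (a * b) ^ 2 := by
    apply smul_left_injective ℂ hv
    simp only
    rw [← pw B b hb, ← pw _ _ hab, S2]
  have b2 : b = a ^ 2 := by
    apply mul_left_cancel₀ (pow_ne_zero 2 b0)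
    linear_combination q2
  have a1 : a = 1 := by
    rw [b2] at q1
    apply mul_left_cancel₀ (pow_ne_zero 5 a0)
    linear_combination -q1
  have b1 : b = 1 := by rw [b2, a1, one_pow]
  rw [a1, one_smul] at ha
  rw [b1, one_smul] at hb
  obtain ⟨x, rfl⟩ := icos_form v hv A dA ha
  obtain ⟨y, rfl⟩ := icos_form v hv B dB hb
  rw [icos_mul, icos_pow, icos_pow] at S1 S2
  have u1 := icos_inj v hv _ _ S1
  have u2 := icos_inj v hv _ _ S2
  push_cast at u1 u2
  have x0 : x = 0 := by linear_combination -u1 - 2 * u2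
  have y0 : y = 0 := by linear_combination u2 + 2 * x0
  simp [x0, y0]
end

section
/- The representation σ₂ of the binary icosahedral group is irreducible: there is no nonzero vector v ∈ ℂ² that is simultaneously an eigenvector of A₂ and of B₂ (i.e., there do not exist v ≠ 0 and λ, μ ∈ ℂ with A₂·v = λ·v and B₂·v = μ·v). -/
noncomputable section

/-- The matrix `A₂`, image of the generator `r` under the representation `σ₂`. -/
def A2 : Matrix (Fin 2) (Fin 2) ℂ :=
  !![e5 - e5^2, -e5^2 - e5^4;
     -e5 - e5^4, -e5 - e5^3]

/-- The matrix `B₂`, image of the generator `s` under the representation `σ₂`. -/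
def B2 : Matrix (Fin 2) (Fin 2) ℂ :=
  !![1, -e5^3;
     e5^2, 0]

lemma e5_cyc : e5^4 + e5^3 + e5^2 + e5 + 1 = 0 := by
  have h : IsPrimitiveRoot e5 5 := by
    have := Complex.isPrimitiveRoot_exp 5 (by norm_num)
    simpa [e5] using this
  have h2 := h.geom_sum_eq_zero (by norm_num)
  simp [Finset.sum_range_succ] at h2
  linear_combination h2

lemma no_common (e m l : ℂ) (he : e^4 + e^3 + e^2 + e + 1 = 0) (hm : m^2 - m + 1 = 0)
    (h1 : (e - e^2) * m + (-e^2 - e^4) * e^2 = l * m)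
    (h2 : (-e - e^4) * m + (-e - e^3) * e^2 = l * e^2) : False := by
  have h5 : e^5 = 1 := by linear_combination (e - 1) * he
  have h3 : e^2 * ((e - e^2) * m + (-e^2 - e^4) * e^2)
      = m * ((-e - e^4) * m + (-e - e^3) * e^2) := by
    linear_combination e^2 * h1 - m * h2
  clear h1 h2
  grind

/-- The representation `σ₂` of the binary icosahedral group is
irreducible: no nonzero vector `v ∈ ℂ²` is simultaneously an eigenvector of `A₂`
and of `B₂`. -/
theorem sigma2_irreducible :
    ¬ ∃ v : Fin 2 → ℂ, v ≠ 0 ∧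
      ∃ l m : ℂ, A2.mulVec v = l • v ∧ B2.mulVec v = m • v := by
  rintro ⟨v, hv, l, m, hA, hB⟩
  have a0 := congrFun hA 0
  have a1 := congrFun hA 1
  have b0 := congrFun hB 0
  have b1 := congrFun hB 1
  simp [A2, B2, Matrix.mulVec, dotProduct, Fin.sum_univ_two] at a0 a1 b0 b1
  have he := e5_cyc
  have h5 : e5^5 = 1 := by linear_combination (e5 - 1) * he
  generalize e5 = e at *
  obtain ⟨z, hz⟩ : ∃ z, z = e^3 * v 1 := ⟨_, rfl⟩
  have hy : v 1 = e^2 * z := by rw [hz]; linear_combination (-v 1) * h5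
  have hx : v 0 = m * z := by
    rw [hz]; linear_combination e^3 * b1 - v 0 * h5
  rw [hx, hy] at a0 a1 b0
  have hz0 : z ≠ 0 := by
    rintro rfl
    apply hv
    ext i
    fin_cases i <;> simp [hx, hy]
  refine no_common e m l he ?_ ?_ ?_ <;> apply mul_right_cancel₀ hz0
  · linear_combination -b0 - z * h5
  · linear_combination a0
  · linear_combination a1

end
end

section
/- The binary icosahedral group is finite of order 120: the group G with presentation ⟨r, s ∣ r⁵ = s³ = (rs)²⟩ satisfies |G| = 120. -/
namespace IcosAux

section upper
variable {G : Type*} [Group G] {r s : G}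

/-- the twelve coset representatives of the cyclic subgroup of r -/
def rep (r s : G) : Fin 12 → G :=
  ![1, s, s * s, s * s * r, s * s * r * r, s * s * r * r * r, s * s * r * r * r * s,
    s * s * r * r * s, s * s * r * r * s * s, s * s * r * r * s * s * r,
    s * s * r * r * s * s * r * r, s * s * r * r * s * s * r * r * s]

def rt : Fin 12 → Fin 12 := ![0, 2, 3, 4, 5, 1, 8, 6, 9, 10, 7, 11]
def re : Fin 12 → ℤ := ![1, -1, 0, 0, 0, 6, 0, -1, 0, 0, 6, -1]
def st : Fin 12 → Fin 12 := ![1, 2, 0, 5, 7, 6, 3, 8, 4, 10, 11, 9]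
def se : Fin 12 → ℤ := ![0, 0, 5, -1, 0, 0, 6, 0, 5, -1, 0, 6]

/-- Scanning `r⁵` around a cycle. -/
lemma scan_r (hz : ∀ g : G, g * r ^ 5 = r ^ 5 * g) {a b c : G}
    (h1 : a * r = r ^ (-1 : ℤ) * b) (h2 : b * r * r * r = c) : c * r = r ^ (6 : ℤ) * a := by
  have h := hz a
  have e : a * r ^ 5 = (a * r) * r * r * r * r := by
    simp only [pow_succ, pow_zero, one_mul, mul_assoc]
  rw [e, h1] at h
  rw [← h2]
  have : b * r * r * r * r = r * (r ^ (-1 : ℤ) * b * r * r * r * r) := by group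
  rw [this, h]; group

lemma scan_s (hz : ∀ g : G, g * s ^ 3 = r ^ 5 * g) {a b c : G}
    (h1 : a * s = r ^ (-1 : ℤ) * b) (h2 : b * s = c) : c * s = r ^ (6 : ℤ) * a := by
  have h := hz a
  have e : a * s ^ 3 = (a * s) * s * s := by
    simp only [pow_succ, pow_zero, one_mul, mul_assoc]
  rw [e, h1] at h
  rw [← h2]
  have : b * s * s = r * (r ^ (-1 : ℤ) * b * s * s) := by group
  rw [this, h]; group

lemma scan_rs (hz : ∀ g : G, g * (r * s) ^ 2 = r ^ 5 * g) {a b d : G} {m n : ℤ}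
    (h1 : a * r * s = r ^ m * b) (h2 : d * s = r ^ n * a) :
    b * r = r ^ (5 - m - n) * d := by
  have h := hz a
  have e : a * (r * s) ^ 2 = (a * r * s) * r * s := by
    simp only [pow_succ, pow_zero, one_mul, mul_assoc]
  rw [e, h1] at h
  have h3 : a = r ^ (-n) * (d * s) := by rw [h2]; group
  rw [h3] at h
  have h4 : r ^ m * b * r = r ^ 5 * (r ^ (-n) * d) := by
    apply mul_right_cancel (b := s); rw [h]; group
  have : b * r = r ^ (-m) * (r ^ m * b * r) := by group
  rw [this, h4]; group
  

lemma scan_rs' (hz : ∀ g : G, g * (r * s) ^ 2 = r ^ 5 * g) {a b c : G}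
    (h1 : a * r = r ^ (6 : ℤ) * b) (h2 : b * s * r = c) :
    c * s = r ^ (-1 : ℤ) * a := by
  have h := hz a
  have e : a * (r * s) ^ 2 = (a * r) * s * r * s := by
    simp only [pow_succ, pow_zero, one_mul, mul_assoc]
  rw [e, h1] at h
  rw [← h2]
  have : b * s * r * s = r ^ (-6 : ℤ) * (r ^ (6 : ℤ) * b * s * r * s) := by group
  rw [this, h]; group


lemma edges (h1 : r ^ 5 = (r * s) ^ 2) (h2 : s ^ 3 = (r * s) ^ 2)
    (hr : ∀ g : G, g * r ^ 5 = r ^ 5 * g) :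
    (∀ i, rep r s i * r = r ^ re i * rep r s (rt i)) ∧
    (∀ i, rep r s i * s = r ^ se i * rep r s (st i)) ∧ r ^ 10 = 1 := by
  have hrs : ∀ g : G, g * (r * s) ^ 2 = r ^ 5 * g := by rw [← h1]; exact hr
  have hs : ∀ g : G, g * s ^ 3 = r ^ 5 * g := by rw [h2]; exact hrs
  obtain ⟨g1, e1⟩ : ∃ g, g = s := ⟨_, rfl⟩
  obtain ⟨g2, e2⟩ : ∃ g, g = g1 * s := ⟨_, rfl⟩
  obtain ⟨g3, e3⟩ : ∃ g, g = g2 * r := ⟨_, rfl⟩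
  obtain ⟨g4, e4⟩ : ∃ g, g = g3 * r := ⟨_, rfl⟩
  obtain ⟨g5, e5⟩ : ∃ g, g = g4 * r := ⟨_, rfl⟩
  obtain ⟨g6, e6⟩ : ∃ g, g = g5 * s := ⟨_, rfl⟩
  obtain ⟨g7, e7⟩ : ∃ g, g = g4 * s := ⟨_, rfl⟩
  obtain ⟨g8, e8⟩ : ∃ g, g = g7 * s := ⟨_, rfl⟩
  obtain ⟨g9, e9⟩ : ∃ g, g = g8 * r := ⟨_, rfl⟩
  obtain ⟨g10, e10⟩ : ∃ g, g = g9 * r := ⟨_, rfl⟩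
  obtain ⟨g11, e11⟩ : ∃ g, g = g10 * s := ⟨_, rfl⟩
  have s2 : g2 * s = r ^ (5 : ℤ) * 1 := by
    have := hs 1
    rw [e2, e1]
    calc s * s * s = 1 * s ^ 3 := by simp only [pow_succ, pow_zero, one_mul, mul_assoc]
      _ = _ := by rw [this]; group
  have r1 : g1 * r = r ^ (-1 : ℤ) * g2 := by
    have := scan_rs (m := 1) hrs (a := 1) (b := g1) (by rw [e1]; group) s2
    simpa using this
  have r5 : g5 * r = r ^ (6 : ℤ) * g1 := scan_r hr r1 (by rw [e5, e4, e3])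
  have s3 : g3 * s = r ^ (-1 : ℤ) * g5 := scan_rs' hrs r5 (by rw [e3, e2])
  have s6 : g6 * s = r ^ (6 : ℤ) * g3 := scan_s hs s3 e6.symm
  have s8 : g8 * s = r ^ (5 : ℤ) * g4 := by
    have := hs g4
    rw [e8, e7]
    calc g4 * s * s * s = g4 * s ^ 3 := by simp only [pow_succ, pow_zero, one_mul, mul_assoc]
      _ = _ := by rw [this]; group
  have r7 : g7 * r = r ^ (-1 : ℤ) * g6 := by
    have := scan_rs (m := 0) hrs (a := g3) (b := g7) (by rw [e7, e4]; group) s6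
    simpa using this
  have r6 : g6 * r = r ^ (0 : ℤ) * g8 := by
    have := scan_rs (m := 0) hrs (a := g4) (b := g6) (by rw [e6, e5]; group) s8
    simpa using this
  have r10 : g10 * r = r ^ (6 : ℤ) * g7 :=
    scan_r hr r7 (by rw [e10, e9, r6, zpow_zero, one_mul])
  have s9 : g9 * s = r ^ (-1 : ℤ) * g10 := scan_rs' hrs r10 (by rw [e9, e8])
  have s11 : g11 * s = r ^ (6 : ℤ) * g9 := scan_s hs s9 e11.symm
  have r11 : g11 * r = r ^ (-1 : ℤ) * g11 := by
    have := scan_rs (m := 0) hrs (a := g9) (b := g11) (by rw [e11, e10]; group) s11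
    simpa using this
  have hrep : rep r s = ![1, g1, g2, g3, g4, g5, g6, g7, g8, g9, g10, g11] := by
    simp only [rep, e1, e2, e3, e4, e5, e6, e7, e8, e9, e10, e11]
  refine ⟨?_, ?_, ?_⟩
  · rw [hrep]
    have z (g : G) : g = r ^ (0 : ℤ) * g := by simp
    intro i
    fin_cases i
    · show 1 * r = r ^ (1 : ℤ) * 1
      simp
    · exact r1
    · exact e3.symm.trans (z _)
    · exact e4.symm.trans (z _)
    · exact e5.symm.trans (z _)
    · exact r5
    · exact r6
    · exact r7
    · exact e9.symm.trans (z _)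
    · exact e10.symm.trans (z _)
    · exact r10
    · exact r11
  · rw [hrep]
    have z (g : G) : g = r ^ (0 : ℤ) * g := by simp
    intro i
    fin_cases i
    · show 1 * s = r ^ (0 : ℤ) * g1
      simp [e1]
    · exact e2.symm.trans (z _)
    · exact s2
    · exact s3
    · exact e7.symm.trans (z _)
    · exact e6.symm.trans (z _)
    · exact s6
    · exact e8.symm.trans (z _)
    · exact s8
    · exact s9
    · exact e11.symm.trans (z _)
    · exact s11
  · have hc : g11 * r * g11⁻¹ = r⁻¹ := by rw [r11]; group
    have h5 : (g11 * r * g11⁻¹) ^ 5 = r ^ 5 := by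
      rw [conj_pow, hr]; group
    rw [hc, inv_pow] at h5
    calc r ^ 10 = r ^ 5 * r ^ 5 := by group
      _ = 1 := by nth_rewrite 1 [← h5]; group

lemma all_reps (hgen : Subgroup.closure {r, s} = ⊤)
    (h1 : r ^ 5 = (r * s) ^ 2) (h2 : s ^ 3 = (r * s) ^ 2) (g : G) :
    ∃ p : Fin 10 × Fin 12, r ^ (p.1 : ℕ) * rep r s p.2 = g := by
  have hrs : s ^ 3 = r ^ 5 := h2.trans h1.symm
  have cr : Commute r (r ^ 5) := (Commute.refl r).pow_right 5
  have cs : Commute s (r ^ 5) := by rw [← hrs]; exact (Commute.refl s).pow_right 3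
  have hr : ∀ g : G, g * r ^ 5 = r ^ 5 * g := by
    intro g
    have hle : Subgroup.closure {r, s} ≤ Subgroup.centralizer {r ^ 5} := by
      rw [Subgroup.closure_le]
      rintro x (rfl | rfl)
      · exact Subgroup.mem_centralizer_singleton_iff.2 cr.eq
      · exact Subgroup.mem_centralizer_singleton_iff.2 cs.eq
    have : g ∈ Subgroup.centralizer {r ^ 5} := hle (hgen ▸ Subgroup.mem_top g)
    exact Subgroup.mem_centralizer_singleton_iff.1 this
  obtain ⟨er, es, h10⟩ := edges h1 h2 hr
  have s6 : s ^ 6 = 1 := by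
    calc s ^ 6 = s ^ 3 * s ^ 3 := by group
      _ = r ^ 10 := by rw [hrs]; group
      _ = 1 := h10
  let P : G → Prop := fun g => ∃ (k : ℤ) (i : Fin 12), g = r ^ k * rep r s i
  have Pr : ∀ g, P g → P (g * r) := by
    rintro _ ⟨k, i, rfl⟩
    exact ⟨k + re i, rt i, by rw [mul_assoc, er, ← mul_assoc, ← zpow_add]⟩
  have Ps : ∀ g, P g → P (g * s) := by
    rintro _ ⟨k, i, rfl⟩
    exact ⟨k + se i, st i, by rw [mul_assoc, es, ← mul_assoc, ← zpow_add]⟩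
  have Prn : ∀ (n : ℕ) g, P g → P (g * r ^ n) := by
    intro n
    induction n with
    | zero => intro g hg; simpa using hg
    | succ n ih => intro g hg; rw [pow_succ, ← mul_assoc]; exact Pr _ (ih g hg)
  have Psn : ∀ (n : ℕ) g, P g → P (g * s ^ n) := by
    intro n
    induction n with
    | zero => intro g hg; simpa using hg
    | succ n ih => intro g hg; rw [pow_succ, ← mul_assoc]; exact Ps _ (ih g hg)
  have ri : r⁻¹ = r ^ 9 := inv_eq_of_mul_eq_one_right (by rw [← pow_succ']; exact h10)
  have si : s⁻¹ = s ^ 5 := inv_eq_of_mul_eq_one_right (by rw [← pow_succ']; exact s6)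
  have hP : P g := by
    have hg : g ∈ Subgroup.closure {r, s} := hgen ▸ Subgroup.mem_top g
    induction hg using Subgroup.closure_induction_right with
    | one => exact ⟨0, 0, by simp [rep]⟩
    | mul_right x _ y hy ih =>
      rcases hy with rfl | rfl
      · exact Pr _ ih
      · exact Ps _ ih
    | mul_inv_cancel x _ y hy ih =>
      rcases hy with rfl | rfl
      · rw [ri]; exact Prn _ _ ih
      · rw [si]; exact Psn _ _ ih
  obtain ⟨k, i, rfl⟩ := hP
  have hk0 := Int.emod_nonneg k (show (10 : ℤ) ≠ 0 by norm_num)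
  have hk1 := Int.emod_lt_of_pos k (show (0 : ℤ) < 10 by norm_num)
  refine ⟨(⟨(k % 10).toNat, by omega⟩, i), ?_⟩
  congr 1
  show r ^ (k % 10).toNat = r ^ k
  rw [← zpow_natCast, Int.toNat_of_nonneg hk0]
  conv_rhs => rw [← Int.emod_add_mul_ediv k 10]
  rw [zpow_add, zpow_mul]
  have : r ^ (10 : ℤ) = 1 := by exact_mod_cast h10
  rw [this]; simp

end upper

section lower

def rex : Fin 12 → Fin 10 := ![1, 9, 0, 0, 0, 6, 0, 9, 0, 0, 6, 9]
def sex : Fin 12 → Fin 10 := ![0, 0, 5, 9, 0, 0, 6, 0, 5, 9, 0, 6]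

def rf (p : Fin 10 × Fin 12) : Fin 10 × Fin 12 := (p.1 + rex p.2, rt p.2)
def sf (p : Fin 10 × Fin 12) : Fin 10 × Fin 12 := (p.1 + sex p.2, st p.2)

def R : Equiv.Perm (Fin 10 × Fin 12) where
  toFun := rf
  invFun := rf^[9]
  left_inv := by unfold Function.LeftInverse; decide +kernel
  right_inv := by unfold Function.RightInverse Function.LeftInverse; decide +kernel

def S : Equiv.Perm (Fin 10 × Fin 12) where
  toFun := sf
  invFun := sf^[5]
  left_inv := by unfold Function.LeftInverse; decide +kernel
  right_inv := by unfold Function.RightInverse Function.LeftInverse; decide +kernel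

lemma RS1 : R ^ 5 = (R * S) ^ 2 := by
  apply Equiv.ext
  show ∀ p, rf (rf (rf (rf (rf p)))) = rf (sf (rf (sf p)))
  decide +kernel

lemma RS2 : S ^ 3 = (R * S) ^ 2 := by
  apply Equiv.ext
  show ∀ p, sf (sf (sf p)) = rf (sf (rf (sf p)))
  decide +kernel

/-- reversed representatives -/
def prep : Fin 12 → Equiv.Perm (Fin 10 × Fin 12) :=
  ![1, S, S * S, R * S * S, R * R * S * S, R * R * R * S * S, S * R * R * R * S * S,
    S * R * R * S * S, S * S * R * R * S * S, R * S * S * R * R * S * S,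
    R * R * S * S * R * R * S * S, S * R * R * S * S * R * R * S * S]

lemma orbit : ∀ p : Fin 10 × Fin 12, (prep p.2 * R ^ (p.1 : ℕ)) (0, 0) = p := by
  decide +kernel

lemma words_mem {G : Type*} [Group G] (H : Subgroup G) {a b : G} (ha : a ∈ H) (hb : b ∈ H)
    (i : Fin 12) : (![1, b, b * b, a * b * b, a * a * b * b, a * a * a * b * b, b * a * a * a * b * b,
      b * a * a * b * b, b * b * a * a * b * b, a * b * b * a * a * b * b,
      a * a * b * b * a * a * b * b, b * a * a * b * b * a * a * b * b] : Fin 12 → G) i ∈ H := by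
  fin_cases i
  · exact one_mem _
  all_goals
    simp
    repeat first | with_reducible exact ha | with_reducible exact hb | refine mul_mem ?_ ?_

lemma prep_mem (i : Fin 12) : prep i ∈ Subgroup.closure {R, S} :=
  words_mem _ (Subgroup.subset_closure (by simp)) (Subgroup.subset_closure (by simp)) i

end lower
end IcosAux

/-- The binary icosahedral group
`G = ⟨r, s ∣ r⁵ = s³ = (rs)²⟩` is finite of order `120`. -/
theorem binaryIcosahedral_card :
    Nat.card (PresentedGroup icosRels) = 120 := by
  let r : PresentedGroup icosRels := PresentedGroup.of 0
  let s : PresentedGroup icosRels := PresentedGroup.of 1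
  have h1 : r ^ 5 = (r * s) ^ 2 := by
    have := PresentedGroup.one_of_mem (rels := icosRels) (Or.inl rfl)
    rw [map_mul, map_inv, mul_inv_eq_one] at this
    simp only [map_pow, map_mul] at this
    exact this
  have h2 : s ^ 3 = (r * s) ^ 2 := by
    have := PresentedGroup.one_of_mem (rels := icosRels) (Or.inr rfl)
    rw [map_mul, map_inv, mul_inv_eq_one] at this
    simp only [map_pow, map_mul] at this
    exact this
  have hgen : Subgroup.closure {r, s} = ⊤ := by
    rw [← PresentedGroup.closure_range_of icosRels]
    congr 1
    ext x
    simp [Fin.exists_fin_two, r, s, eq_comm]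
  have hsurj := IcosAux.all_reps hgen h1 h2
  let f : Fin 2 → Equiv.Perm (Fin 10 × Fin 12) := ![IcosAux.R, IcosAux.S]
  have hf : ∀ x ∈ icosRels, FreeGroup.lift f x = 1 := by
    rintro x (rfl | rfl)
    · rw [map_mul, map_inv, mul_inv_eq_one]
      simpa [f] using IcosAux.RS1
    · rw [map_mul, map_inv, mul_inv_eq_one]
      simpa [f] using IcosAux.RS2
  let φ := PresentedGroup.toGroup hf
  have hφr : φ r = IcosAux.R := PresentedGroup.toGroup.of hf
  have hφs : φ s = IcosAux.S := PresentedGroup.toGroup.of hf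
  have hle : Subgroup.closure {IcosAux.R, IcosAux.S} ≤ φ.range := by
    rw [Subgroup.closure_le]
    rintro x (rfl | rfl)
    · exact ⟨r, hφr⟩
    · exact ⟨s, hφs⟩
  have hsurj2 : Function.Surjective (fun g => φ g ((0, 0) : Fin 10 × Fin 12)) := by
    intro p
    obtain ⟨g, hg⟩ := hle (IcosAux.prep_mem p.2)
    refine ⟨g * r ^ (p.1 : ℕ), ?_⟩
    show φ (g * r ^ (p.1 : ℕ)) (0, 0) = p
    rw [map_mul, map_pow, hg, hφr]
    exact IcosAux.orbit p
  have hc : Nat.card (Fin 10 × Fin 12) = 120 := by simp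
  have : Finite (PresentedGroup icosRels) := Finite.of_surjective _ hsurj
  apply le_antisymm
  · rw [← hc]; exact Nat.card_le_card_of_surjective _ hsurj
  · rw [← hc]; exact Nat.card_le_card_of_surjective _ hsurj2
end
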